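/- If μ is a Radon measure whose support is the compact set Γ ⊂ ℝⁿ, and μ is upper d-regular on Γ for some d ∈ (n−2, n], then the trace-continuity assumption holds: there is C > 0 with ‖v|_Γ‖_{L²(Γ,μ)} ≤ C‖v‖_{H¹(ℝⁿ)} for all v ∈ 𝒮(ℝⁿ), so the trace map v ↦ v|_Γ extends to a continuous linear operator H¹(ℝⁿ) → L²(Γ,μ). -/

import Mathlib

/-!
STATEMENT 8 (`thm:Bie`, after Jonsson): if `μ` is a Radon measure whose support is the
compact set `Γ ⊆ ℝⁿ` and `μ` is upper `d`-regular on `Γ` for some `d ∈ (n−2, n]`, then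
the trace-continuity inequality holds: there is `C > 0` with
`‖v|_Γ‖_{L²(Γ,μ)} ≤ C ‖v‖_{H¹(ℝⁿ)}` for all `v ∈ 𝒮(ℝⁿ)` (so that, by density of
`𝒮(ℝⁿ)` in `H¹(ℝⁿ)`, the trace map `v ↦ v|_Γ` extends to a continuous linear operator
`H¹(ℝⁿ) → L²(Γ,μ)`).

Everything is concrete: the `H¹(ℝⁿ)` norm of a Schwartz function is realized, via
Plancherel's theorem, as `‖v‖²_{H¹} = ∫ (‖v‖² + ‖∇v‖²)`; upper `d`-regularity means
`μ(B_r(x)) ≤ c r^d` for all `x ∈ Γ` and `0 < r ≤ 1` (closed balls).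
-/

open MeasureTheory Metric Set
open scoped ENNReal

noncomputable section

abbrev Rn (n : ℕ) : Type := EuclideanSpace ℝ (Fin n)

/-- The squared `H¹(ℝⁿ)` norm `∫ (‖u‖² + ‖∇u‖²)`, which for Schwartz functions agrees
with `∫ (1+|ξ|²)|û(ξ)|² dξ` by Plancherel. -/
def H1normSq {n : ℕ} (u : Rn n → ℂ) : ℝ :=
  ∫ x, (‖u x‖ ^ 2 + ‖fderiv ℝ u x‖ ^ 2)

open scoped NNReal

/-!
For `y` in the ball of radius `1 / 2`, the fundamental theorem of calculus along the segment from
`x` to `x + y` gives `‖v x‖ ≤ ‖v (x + y)‖ + ∫₀¹ ‖Dv (x + t y)‖ dt`. Take `L^p` norms in `(x, y)`,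
with `x` distributed by `μ|_Γ` and `y` by Lebesgue measure, using Minkowski's integral inequality
for the last term. By Tonelli, upper regularity at scale `t` and the change of variables
`z = x + t y`, the `L^p` norm of `(x, y) ↦ g (x + t y)` is at most `c^(1/p) t^((d - n)/p) ‖g‖_p`,
and this power of `t` is integrable on `(0, 1]` exactly when `d > n - p`. The theorem is the case
`p = 2`.
-/

section Minkowski

variable {X T : Type*} [MeasurableSpace X] [MeasurableSpace T]
  {μ : Measure X} {τ : Measure T} {p : ℝ≥0∞} {f : X → T → ℝ≥0∞}

theorem lintegral_rpow_le_measure_univ_rpow_mul {q : ℝ} (hq : 1 ≤ q) {f : T → ℝ≥0∞}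
    (hf : Measurable f) :
    (∫⁻ t, f t ∂τ) ^ q ≤ τ univ ^ (q - 1) * ∫⁻ t, f t ^ q ∂τ := by
  have hq0 : 0 < q := one_pos.trans_le hq
  have h := eLpNorm'_le_eLpNorm'_mul_rpow_measure_univ one_pos hq
    (hf.aestronglyMeasurable (μ := τ))
  simp only [eLpNorm', enorm_eq_self, ENNReal.rpow_one, div_one] at h
  calc (∫⁻ t, f t ∂τ) ^ q
      ≤ ((∫⁻ t, f t ^ q ∂τ) ^ (1 / q) * τ univ ^ (1 - 1 / q)) ^ q := by gcongr
    _ = τ univ ^ (q - 1) * ∫⁻ t, f t ^ q ∂τ := by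
        rw [ENNReal.mul_rpow_of_nonneg _ _ hq0.le, ← ENNReal.rpow_mul, ← ENNReal.rpow_mul,
          one_div_mul_cancel hq0.ne', sub_mul, one_div_mul_cancel hq0.ne', one_mul,
          ENNReal.rpow_one, mul_comm]

variable [SFinite μ] [SFinite τ]

theorem eLpNorm_lintegral_le_measure_univ_mul (hp : 1 ≤ p) (hp' : p ≠ ∞)
    (hf : Measurable (Function.uncurry f)) {M : ℝ≥0∞}
    (hM : ∀ᵐ t ∂τ, eLpNorm (f · t) p μ ≤ M) :
    eLpNorm (fun x ↦ ∫⁻ t, f x t ∂τ) p μ ≤ τ univ * M := by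
  have hp0 : p ≠ 0 := (one_pos.trans_le hp).ne'
  set q := p.toReal
  have hq : 1 ≤ q := by simpa using ENNReal.toReal_mono hp' hp
  have hq0 : 0 < q := one_pos.trans_le hq
  have hfq : Measurable (Function.uncurry fun x t ↦ f x t ^ q) := hf.pow_const q
  have hMq : ∀ᵐ t ∂τ, ∫⁻ x, f x t ^ q ∂μ ≤ M ^ q := by
    filter_upwards [hM] with t ht
    rwa [eLpNorm_eq_lintegral_rpow_enorm_toReal hp0 hp', one_div, ENNReal.rpow_inv_le_iff hq0] at ht
  rw [eLpNorm_eq_lintegral_rpow_enorm_toReal hp0 hp', one_div, ENNReal.rpow_inv_le_iff hq0]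
  calc ∫⁻ x, (∫⁻ t, f x t ∂τ) ^ q ∂μ
      ≤ ∫⁻ x, τ univ ^ (q - 1) * ∫⁻ t, f x t ^ q ∂τ ∂μ :=
        lintegral_mono fun x ↦ lintegral_rpow_le_measure_univ_rpow_mul hq hf.of_uncurry_left
    _ = τ univ ^ (q - 1) * ∫⁻ t, ∫⁻ x, f x t ^ q ∂μ ∂τ := by
        rw [lintegral_const_mul _ hfq.lintegral_prod_right,
          lintegral_lintegral_swap hfq.aemeasurable]
    _ ≤ τ univ ^ (q - 1) * ∫⁻ _, M ^ q ∂τ := mul_le_mul_right (lintegral_mono_ae hMq) _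
    _ = (τ univ * M) ^ q := by
        have hsplit : τ univ ^ (q - 1) * τ univ = τ univ ^ q := by
          simpa using
            (ENNReal.rpow_add_of_nonneg (x := τ univ) _ _ (sub_nonneg.2 hq) zero_le_one).symm
        rw [lintegral_const, ENNReal.mul_rpow_of_nonneg _ _ hq0.le, ← hsplit]
        ring

-- Minkowski's integral inequality. Dividing `f` by `N t = ‖f (·, t)‖_p` and replacing `τ` by the
-- finite measure `N τ` reduces it to slices of norm at most `1`, where Hölder and Tonelli suffice.
theorem eLpNorm_lintegral_le_lintegral_eLpNorm (hp : 1 ≤ p) (hp' : p ≠ ∞)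
    (hf : Measurable (Function.uncurry f)) :
    eLpNorm (fun x ↦ ∫⁻ t, f x t ∂τ) p μ ≤ ∫⁻ t, eLpNorm (f · t) p μ ∂τ := by
  have hp0 : p ≠ 0 := (one_pos.trans_le hp).ne'
  set N : T → ℝ≥0∞ := fun t ↦ eLpNorm (f · t) p μ with hNdef
  have hN : Measurable N := by
    simp only [hNdef, eLpNorm_eq_lintegral_rpow_enorm_toReal hp0 hp', enorm_eq_self]
    exact (hf.pow_const p.toReal).lintegral_prod_left'.pow_const _
  by_cases hNtop : ∫⁻ t, N t ∂τ = ∞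
  · simp [hNtop]
  have hfN : Measurable (Function.uncurry fun x t ↦ f x t / N t) :=
    hf.div (hN.comp measurable_snd)
  have hfactor : ∀ᵐ x ∂μ, ∀ᵐ t ∂τ, f x t = N t * (f x t / N t) := by
    have hmeas : MeasurableSet {q : X × T | f q.1 q.2 = N q.2 * (f q.1 q.2 / N q.2)} :=
      measurableSet_eq_fun hf ((hN.comp measurable_snd).mul hfN)
    rw [Measure.ae_ae_comm hmeas]
    filter_upwards [ae_lt_top hN hNtop] with t ht
    by_cases h0 : N t = 0
    · have hft : (f · t) =ᵐ[μ] 0 :=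
        (eLpNorm_eq_zero_iff hf.of_uncurry_right.aestronglyMeasurable hp0).1 h0
      filter_upwards [hft] with x hx
      simp_all
    · exact .of_forall fun x ↦ (ENNReal.mul_div_cancel h0 ht.ne).symm
  calc eLpNorm (fun x ↦ ∫⁻ t, f x t ∂τ) p μ
      = eLpNorm (fun x ↦ ∫⁻ t, f x t / N t ∂τ.withDensity N) p μ := by
        refine eLpNorm_congr_ae ?_
        filter_upwards [hfactor] with x hx
        rw [lintegral_withDensity_eq_lintegral_mul _ hN hfN.of_uncurry_left]
        exact lintegral_congr_ae hx
    _ ≤ τ.withDensity N univ * 1 := by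
        refine eLpNorm_lintegral_le_measure_univ_mul hp hp' hfN (.of_forall fun t ↦ ?_)
        calc eLpNorm (fun x ↦ f x t / N t) p μ
            ≤ (N t)⁻¹ * N t := eLpNorm_le_mul_eLpNorm_of_ae_le_mul'' p
              hf.of_uncurry_right.aestronglyMeasurable
              (.of_forall fun x ↦ by simp [div_eq_mul_inv, mul_comm])
          _ ≤ 1 := ENNReal.inv_mul_le_one _
    _ = ∫⁻ t, N t ∂τ := by simp [withDensity_apply]

end Minkowski

/-- Upper `d`-regularity of `μ` on `Γ` with constant `c`: the upper half of Ahlfors `d`-regularity,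
at scales up to `1`. -/
def IsUpperRegularOn {X : Type*} [PseudoMetricSpace X] [MeasurableSpace X] (μ : Measure X)
    (Γ : Set X) (d c : ℝ) : Prop :=
  ∀ x ∈ Γ, ∀ r : ℝ, 0 < r → r ≤ 1 → μ (closedBall x r) ≤ ENNReal.ofReal (c * r ^ d)

namespace IsUpperRegularOn

variable {X : Type*} [PseudoMetricSpace X] [MeasurableSpace X] [OpensMeasurableSpace X]
  {μ : Measure X} {Γ : Set X} {d c : ℝ}

-- A ball of radius `t / 2` that meets `Γ` lies in a ball of radius `t` centred on `Γ`.
theorem restrict_closedBall_half_le (h : IsUpperRegularOn μ Γ d c) (z : X) {t : ℝ} (ht : 0 < t)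
    (ht' : t ≤ 1) : μ.restrict Γ (closedBall z (t / 2)) ≤ ENNReal.ofReal (c * t ^ d) := by
  rw [Measure.restrict_apply measurableSet_closedBall]
  rcases (closedBall z (t / 2) ∩ Γ).eq_empty_or_nonempty with hempty | ⟨x, hxz, hxΓ⟩
  · simp [hempty]
  · have hsub : closedBall z (t / 2) ⊆ closedBall x t :=
      closedBall_subset_closedBall' (by linarith [mem_closedBall'.1 hxz])
    exact (measure_mono (inter_subset_left.trans hsub)).trans (h x hxΓ t ht ht')

theorem isLocallyFiniteMeasure_restrict (h : IsUpperRegularOn μ Γ d c) :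
    IsLocallyFiniteMeasure (μ.restrict Γ) where
  finiteAtNhds z := ⟨closedBall z (1 / 2), closedBall_mem_nhds z (by norm_num),
    (h.restrict_closedBall_half_le z one_pos le_rfl).trans_lt ENNReal.ofReal_lt_top⟩

end IsUpperRegularOn

section BallAverages

theorem lintegral_setLIntegral_closedBall {X : Type*} [PseudoMetricSpace X]
    [SecondCountableTopology X] [MeasurableSpace X] [OpensMeasurableSpace X] (μ ν : Measure X)
    [SFinite μ] [SFinite ν] (r : ℝ) {g : X → ℝ≥0∞} (hg : Measurable g) :
    ∫⁻ x, ∫⁻ z in closedBall x r, g z ∂ν ∂μ = ∫⁻ z, μ (closedBall z r) * g z ∂ν := by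
  have hS : MeasurableSet {q : X × X | dist q.1 q.2 ≤ r} :=
    measurableSet_le measurable_dist measurable_const
  have hF : Measurable (Function.uncurry fun x z ↦ (closedBall x r).indicator g z) := by
    convert (hg.comp measurable_snd).indicator hS using 1
    ext ⟨x, z⟩
    simp [indicator, dist_comm]
  calc ∫⁻ x, ∫⁻ z in closedBall x r, g z ∂ν ∂μ
      = ∫⁻ x, ∫⁻ z, (closedBall x r).indicator g z ∂ν ∂μ := by
        simp only [lintegral_indicator measurableSet_closedBall]
    _ = ∫⁻ z, ∫⁻ x, (closedBall z r).indicator (fun _ ↦ g z) x ∂μ ∂ν := by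
        rw [lintegral_lintegral_swap hF.aemeasurable]
        simp only [indicator, mem_closedBall, dist_comm]
    _ = ∫⁻ z, μ (closedBall z r) * g z ∂ν := by
        simp only [lintegral_indicator_const measurableSet_closedBall, mul_comm]

variable {E : Type*} [NormedAddCommGroup E] [NormedSpace ℝ E] [FiniteDimensional ℝ E]
  [MeasurableSpace E] [BorelSpace E] (ν : Measure E) [ν.IsAddHaarMeasure]

theorem setLIntegral_closedBall_comp_add_smul (x : E) {t : ℝ} (ht : 0 < t) (ρ : ℝ) {g : E → ℝ≥0∞}
    (hg : Measurable g) :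
    ∫⁻ y in closedBall 0 ρ, g (x + t • y) ∂ν =
      ENNReal.ofReal (t ^ Module.finrank ℝ E)⁻¹ * ∫⁻ z in closedBall x (t * ρ), g z ∂ν := by
  have hpre : (fun y : E ↦ x + t • y) ⁻¹' closedBall x (t * ρ) = closedBall 0 ρ := by
    ext y
    simp [norm_smul, abs_of_pos ht, ht]
  have hmap : ν.map (fun y : E ↦ x + t • y) =
      ENNReal.ofReal (t ^ Module.finrank ℝ E)⁻¹ • ν := by
    rw [← abs_of_pos (show 0 < (t ^ Module.finrank ℝ E)⁻¹ by positivity),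
      ← map_add_left_eq_self (ENNReal.ofReal _ • ν) x, ← Measure.map_addHaar_smul ν ht.ne',
      Measure.map_map (measurable_const_add x) (measurable_const_smul t)]
    rfl
  rw [← smul_eq_mul, ← lintegral_smul_measure, ← Measure.restrict_smul, ← hmap,
    setLIntegral_map measurableSet_closedBall hg (by fun_prop), hpre]

theorem eLpNorm_prod_comp_add_smul_le {ε : Type*} [TopologicalSpace ε] [ContinuousENorm ε]
    (μ : Measure E) [SFinite μ] {p : ℝ≥0∞} (hp : p ≠ 0) (hp' : p ≠ ∞) {t ρ : ℝ} (ht : 0 < t)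
    {M : ℝ≥0∞} (hM : ∀ z, μ (closedBall z (t * ρ)) ≤ M) {g : E → ε} (hg : StronglyMeasurable g) :
    eLpNorm (fun q : E × E ↦ g (q.1 + t • q.2)) p (μ.prod (ν.restrict (closedBall 0 ρ))) ≤
      (ENNReal.ofReal (t ^ Module.finrank ℝ E)⁻¹ * M) ^ (1 / p.toReal) * eLpNorm g p ν := by
  set G : E → ℝ≥0∞ := fun z ↦ ‖g z‖ₑ ^ p.toReal
  set a := ENNReal.ofReal (t ^ Module.finrank ℝ E)⁻¹
  have hG : Measurable G := hg.enorm.pow_const _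
  have hGt : Measurable fun q : E × E ↦ G (q.1 + t • q.2) := hG.comp (by fun_prop)
  rw [eLpNorm_eq_lintegral_rpow_enorm_toReal hp hp', eLpNorm_eq_lintegral_rpow_enorm_toReal hp hp',
    ← ENNReal.mul_rpow_of_nonneg _ _ (by positivity)]
  gcongr
  calc ∫⁻ q, G (q.1 + t • q.2) ∂μ.prod (ν.restrict (closedBall 0 ρ))
      = ∫⁻ x, a * ∫⁻ z in closedBall x (t * ρ), G z ∂ν ∂μ := by
        rw [lintegral_prod _ hGt.aemeasurable]
        simp only [setLIntegral_closedBall_comp_add_smul ν _ ht ρ hG, a]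
    _ ≤ a * ∫⁻ z, μ (closedBall z (t * ρ)) * G z ∂ν := by
        rw [lintegral_const_mul' _ _ ENNReal.ofReal_ne_top,
          lintegral_setLIntegral_closedBall μ ν _ hG]
    _ ≤ a * ∫⁻ z, M * G z ∂ν := by gcongr with z; exact hM z
    _ = a * M * ∫⁻ z, G z ∂ν := by rw [lintegral_const_mul _ hG, mul_assoc]

end BallAverages

section Trace

theorem enorm_sub_le_enorm_mul_lintegral_enorm_fderiv {E F : Type*} [NormedAddCommGroup E]
    [NormedSpace ℝ E] [NormedAddCommGroup F] [NormedSpace ℝ F] {v : E → F} (hv : ContDiff ℝ 1 v)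
    (x y : E) :
    ‖v (x + y) - v x‖ₑ ≤ ‖y‖ₑ * ∫⁻ t in Ioc (0 : ℝ) 1, ‖fderiv ℝ v (x + t • y)‖ₑ := by
  have hsegment (t : ℝ) : HasDerivAt (fun s : ℝ ↦ v (x + s • y)) (fderiv ℝ v (x + t • y) y) t := by
    have hline : HasDerivAt (fun s : ℝ ↦ x + s • y) y t := by
      simpa using ((hasDerivAt_id t).smul_const y).const_add x
    exact (hv.differentiable one_ne_zero _).hasFDerivAt.comp_hasDerivAt t hline
  have hsmooth : ContDiff ℝ 1 fun s : ℝ ↦ v (x + s • y) := hv.comp (by fun_prop)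
  calc ‖v (x + y) - v x‖ₑ
      ≤ ∫⁻ t in Ioc (0 : ℝ) 1, ‖fderiv ℝ v (x + t • y) y‖ₑ := by
        simpa [(hsegment _).deriv, restrict_Ioc_eq_restrict_Icc] using
          enorm_sub_le_lintegral_deriv_of_contDiffOn_Icc hsmooth.contDiffOn zero_le_one
    _ ≤ ∫⁻ t in Ioc (0 : ℝ) 1, ‖y‖ₑ * ‖fderiv ℝ v (x + t • y)‖ₑ :=
        lintegral_mono fun t ↦ ((fderiv ℝ v (x + t • y)).le_opENorm y).trans_eq (mul_comm _ _)
    _ = ‖y‖ₑ * ∫⁻ t in Ioc (0 : ℝ) 1, ‖fderiv ℝ v (x + t • y)‖ₑ :=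
        lintegral_const_mul' _ _ enorm_ne_top

theorem enorm_le_enorm_add_lintegral_enorm_fderiv {E F : Type*} [NormedAddCommGroup E]
    [NormedSpace ℝ E] [NormedAddCommGroup F] [NormedSpace ℝ F] {v : E → F} (hv : ContDiff ℝ 1 v)
    (x : E) {y : E} (hy : ‖y‖ ≤ 1) :
    ‖v x‖ₑ ≤ ‖v (x + y)‖ₑ + ∫⁻ t in Ioc (0 : ℝ) 1, ‖fderiv ℝ v (x + t • y)‖ₑ := by
  have hy' : ‖y‖ₑ ≤ 1 := by rwa [← ofReal_norm, ENNReal.ofReal_le_one]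
  calc ‖v x‖ₑ = ‖v (x + y) - (v (x + y) - v x)‖ₑ := by rw [sub_sub_cancel]
    _ ≤ ‖v (x + y)‖ₑ + ‖v (x + y) - v x‖ₑ := enorm_sub_le
    _ ≤ ‖v (x + y)‖ₑ + ∫⁻ t in Ioc (0 : ℝ) 1, ‖fderiv ℝ v (x + t • y)‖ₑ := by
        gcongr
        exact (enorm_sub_le_enorm_mul_lintegral_enorm_fderiv hv x y).trans
          (mul_le_of_le_one_left' hy')

theorem continuous_uncurry_enorm_fderiv_add_smul {E F : Type*} [NormedAddCommGroup E]
    [NormedSpace ℝ E] [NormedAddCommGroup F] [NormedSpace ℝ F] {v : E → F}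
    (hv : ContDiff ℝ 1 v) :
    Continuous (Function.uncurry fun (q : E × E) (t : ℝ) ↦ ‖fderiv ℝ v (q.1 + t • q.2)‖ₑ) :=
  ((hv.continuous_fderiv one_ne_zero).comp (by fun_prop)).enorm

theorem setLIntegral_Ioc_ofReal_rpow_lt_top {s : ℝ} (hs : -1 < s) :
    ∫⁻ t in Ioc (0 : ℝ) 1, ENNReal.ofReal (t ^ s) < ∞ :=
  ((intervalIntegrable_iff_integrableOn_Ioc_of_le zero_le_one).1
    (intervalIntegral.intervalIntegrable_rpow' hs)).lintegral_lt_top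

theorem eLpNorm_comp_fst {X Y ε : Type*} [MeasurableSpace X] [MeasurableSpace Y]
    [TopologicalSpace ε] [ContinuousENorm ε] (μ : Measure X) (ν : Measure Y) [SFinite ν]
    {p : ℝ≥0∞} (hp : p ≠ ∞) {f : X → ε} (hf : StronglyMeasurable f) :
    eLpNorm (fun q : X × Y ↦ f q.1) p (μ.prod ν) = ν univ ^ (1 / p.toReal) * eLpNorm f p μ := by
  rw [← Function.comp_def f Prod.fst, ← eLpNorm_map_measure hf.aestronglyMeasurable
    measurable_fst.aemeasurable, Measure.map_fst_prod, eLpNorm_smul_measure_of_ne_top hp,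
    ENNReal.toReal_div, ENNReal.toReal_one, smul_eq_mul]

variable {E : Type*} [NormedAddCommGroup E] [NormedSpace ℝ E] [FiniteDimensional ℝ E]
  [MeasurableSpace E] [BorelSpace E] (ν : Measure E) [ν.IsAddHaarMeasure] {μ : Measure E}
  {Γ : Set E} {d c : ℝ} {p : ℝ≥0∞}

-- The factor `t ^ (d / p)` is the mass of a ball of radius `t`, and `t ^ (-finrank ℝ E / p)` is the
-- Jacobian of `y ↦ x + t • y`.
theorem IsUpperRegularOn.eLpNorm_comp_add_smul_le (h : IsUpperRegularOn μ Γ d c) (hp : p ≠ 0)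
    (hp' : p ≠ ∞) {t : ℝ} (ht : t ∈ Ioc 0 1) {ε : Type*} [TopologicalSpace ε] [ContinuousENorm ε]
    {g : E → ε} (hg : StronglyMeasurable g) :
    eLpNorm (fun q : E × E ↦ g (q.1 + t • q.2)) p
        ((μ.restrict Γ).prod (ν.restrict (closedBall 0 (1 / 2)))) ≤
      ENNReal.ofReal c ^ (1 / p.toReal) *
        ENNReal.ofReal (t ^ ((d - Module.finrank ℝ E) / p.toReal)) * eLpNorm g p ν := by
  have := h.isLocallyFiniteMeasure_restrict
  have hball (z : E) : μ.restrict Γ (closedBall z (t * (1 / 2))) ≤ ENNReal.ofReal (c * t ^ d) := by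
    simpa [div_eq_mul_inv] using h.restrict_closedBall_half_le z ht.1 ht.2
  have hexp : (t ^ Module.finrank ℝ E)⁻¹ * (c * t ^ d) = c * t ^ (d - Module.finrank ℝ E) := by
    rw [Real.rpow_sub ht.1, Real.rpow_natCast]
    ring
  have hpow : 0 ≤ t ^ (d - Module.finrank ℝ E) := Real.rpow_nonneg ht.1.le _
  have hinv : 0 ≤ (t ^ Module.finrank ℝ E)⁻¹ := inv_nonneg.2 (pow_nonneg ht.1.le _)
  refine (eLpNorm_prod_comp_add_smul_le ν _ hp hp' ht.1 hball hg).trans_eq ?_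
  rw [← ENNReal.ofReal_mul hinv, hexp, ENNReal.ofReal_mul' hpow,
    ENNReal.mul_rpow_of_nonneg _ _ (by positivity),
    ENNReal.ofReal_rpow_of_nonneg hpow (by positivity), ← Real.rpow_mul ht.1.le, mul_one_div]

variable {F : Type*} [NormedAddCommGroup F] [NormedSpace ℝ F]

theorem IsUpperRegularOn.eLpNorm_lintegral_enorm_fderiv_le (h : IsUpperRegularOn μ Γ d c)
    (hp : 1 ≤ p) (hp' : p ≠ ∞) {v : E → F} (hv : ContDiff ℝ 1 v) :
    eLpNorm (fun q : E × E ↦ ∫⁻ t in Ioc (0 : ℝ) 1, ‖fderiv ℝ v (q.1 + t • q.2)‖ₑ) p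
        ((μ.restrict Γ).prod (ν.restrict (closedBall 0 (1 / 2)))) ≤
      ENNReal.ofReal c ^ (1 / p.toReal) * ((∫⁻ t in Ioc (0 : ℝ) 1,
        ENNReal.ofReal (t ^ ((d - Module.finrank ℝ E) / p.toReal))) *
          eLpNorm (fderiv ℝ v) p ν) := by
  have := h.isLocallyFiniteMeasure_restrict
  have hDv : Continuous (fderiv ℝ v) := hv.continuous_fderiv one_ne_zero
  refine (eLpNorm_lintegral_le_lintegral_eLpNorm hp hp'
    (continuous_uncurry_enorm_fderiv_add_smul hv).measurable).trans ?_
  rw [← lintegral_mul_const _ (by fun_prop), ← lintegral_const_mul _ (by fun_prop)]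
  refine setLIntegral_mono' measurableSet_Ioc fun t ht ↦ ?_
  rw [eLpNorm_enorm, ← mul_assoc]
  exact h.eLpNorm_comp_add_smul_le ν (one_pos.trans_le hp).ne' hp' ht hDv.stronglyMeasurable

theorem IsUpperRegularOn.measure_rpow_mul_eLpNorm_restrict_le (h : IsUpperRegularOn μ Γ d c)
    (hp : 1 ≤ p) (hp' : p ≠ ∞) {v : E → F} (hv : ContDiff ℝ 1 v) :
    ν (closedBall 0 (1 / 2)) ^ (1 / p.toReal) * eLpNorm v p (μ.restrict Γ) ≤
      ENNReal.ofReal c ^ (1 / p.toReal) * (eLpNorm v p ν + (∫⁻ t in Ioc (0 : ℝ) 1,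
        ENNReal.ofReal (t ^ ((d - Module.finrank ℝ E) / p.toReal))) *
          eLpNorm (fderiv ℝ v) p ν) := by
  have := h.isLocallyFiniteMeasure_restrict
  set B : Set E := closedBall 0 (1 / 2)
  set P := (μ.restrict Γ).prod (ν.restrict B)
  set V : E × E → ℝ≥0∞ := fun q ↦ ‖v (q.1 + q.2)‖ₑ
  set D : E × E → ℝ≥0∞ := fun q ↦ ∫⁻ t in Ioc (0 : ℝ) 1, ‖fderiv ℝ v (q.1 + t • q.2)‖ₑ
  have hV : Measurable V := (hv.continuous.comp continuous_add).enorm.measurable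
  have hD : Measurable D :=
    (continuous_uncurry_enorm_fderiv_add_smul hv).measurable.lintegral_prod_right
  have hpointwise : ∀ᵐ q ∂P, ‖v q.1‖ₑ ≤ ‖(V + D) q‖ₑ := by
    have hB : ∀ᵐ q ∂P, q.2 ∈ B :=
      Measure.quasiMeasurePreserving_snd.ae (ae_restrict_mem measurableSet_closedBall)
    filter_upwards [hB] with q hq
    have hq_norm : ‖q.2‖ ≤ 1 := by linarith [mem_closedBall_zero_iff.1 hq]
    exact enorm_le_enorm_add_lintegral_enorm_fderiv hv q.1 hq_norm
  have htranslate : eLpNorm V p P ≤ ENNReal.ofReal c ^ (1 / p.toReal) * eLpNorm v p ν := by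
    simpa [V, P, B, eLpNorm_enorm] using h.eLpNorm_comp_add_smul_le ν (one_pos.trans_le hp).ne' hp'
      (right_mem_Ioc.2 one_pos) hv.continuous.stronglyMeasurable
  calc ν B ^ (1 / p.toReal) * eLpNorm v p (μ.restrict Γ)
      = eLpNorm (fun q : E × E ↦ v q.1) p P := by
        rw [eLpNorm_comp_fst _ _ hp' hv.continuous.stronglyMeasurable, Measure.restrict_apply_univ]
    _ ≤ eLpNorm (V + D) p P := eLpNorm_mono_enorm_ae hpointwise
    _ ≤ eLpNorm V p P + eLpNorm D p P :=
        eLpNorm_add_le hV.aestronglyMeasurable hD.aestronglyMeasurable hp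
    _ ≤ _ := by
        rw [mul_add]
        exact add_le_add htranslate (h.eLpNorm_lintegral_enorm_fderiv_le ν hp hp' hv)

end Trace

theorem statement8_general {E F : Type*} [NormedAddCommGroup E] [NormedSpace ℝ E]
    [FiniteDimensional ℝ E] [MeasurableSpace E] [BorelSpace E] [NormedAddCommGroup F]
    [NormedSpace ℝ F] (ν : Measure E) [ν.IsAddHaarMeasure] {μ : Measure E} {Γ : Set E} {d c : ℝ}
    {p : ℝ≥0∞} (hp : 1 ≤ p) (hp' : p ≠ ∞) (hd : Module.finrank ℝ E - p.toReal < d)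
    (h : IsUpperRegularOn μ Γ d c) :
    ∃ C : ℝ≥0, 0 < C ∧ ∀ v : E → F, ContDiff ℝ 1 v →
      eLpNorm v p (μ.restrict Γ) ≤ C * (eLpNorm v p ν + eLpNorm (fderiv ℝ v) p ν) := by
  set b := ν (closedBall 0 (1 / 2)) ^ (1 / p.toReal)
  set a := ENNReal.ofReal c ^ (1 / p.toReal)
  set A := ∫⁻ t in Ioc (0 : ℝ) 1, ENNReal.ofReal (t ^ ((d - Module.finrank ℝ E) / p.toReal))
  have hp0 : 0 < p.toReal := ENNReal.toReal_pos (one_pos.trans_le hp).ne' hp'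
  have hA : A < ∞ := setLIntegral_Ioc_ofReal_rpow_lt_top (by rw [lt_div_iff₀ hp0]; linarith)
  have hball : 0 < ν (closedBall 0 (1 / 2)) := measure_closedBall_pos _ _ (by norm_num)
  have hb0 : b ≠ 0 := (ENNReal.rpow_pos hball measure_closedBall_lt_top.ne).ne'
  have hb : b ≠ ∞ := ENNReal.rpow_ne_top_of_nonneg (by positivity) measure_closedBall_lt_top.ne
  have ha : a ≠ ∞ := ENNReal.rpow_ne_top_of_nonneg (by positivity) ENNReal.ofReal_ne_top
  have hfinite : b⁻¹ * (a * (1 + A)) ≠ ∞ := by finiteness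
  have hle : b⁻¹ * (a * (1 + A)) ≤ ((b⁻¹ * (a * (1 + A))).toNNReal + 1 : ℝ≥0) :=
    (ENNReal.coe_toNNReal hfinite).ge.trans (ENNReal.coe_le_coe.2 le_self_add)
  refine ⟨(b⁻¹ * (a * (1 + A))).toNNReal + 1, by positivity, fun v hv ↦ ?_⟩
  set x := eLpNorm v p ν
  set y := eLpNorm (fderiv ℝ v) p ν
  calc eLpNorm v p (μ.restrict Γ)
      = b⁻¹ * (b * eLpNorm v p (μ.restrict Γ)) := by
        rw [← mul_assoc, ENNReal.inv_mul_cancel hb0 hb, one_mul]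
    _ ≤ b⁻¹ * (a * (x + A * y)) :=
        mul_le_mul_right (h.measure_rpow_mul_eLpNorm_restrict_le ν hp hp' hv) _
    _ ≤ b⁻¹ * (a * ((1 + A) * (x + y))) := by
        gcongr
        rw [mul_add]
        gcongr
        · exact le_mul_of_one_le_left' le_self_add
        · exact le_add_self
    _ = b⁻¹ * (a * (1 + A)) * (x + y) := by ring
    _ ≤ _ := by gcongr

theorem lpNorm_two_eq_sqrt_integral {X F : Type*} [MeasurableSpace X] [NormedAddCommGroup F]
    {μ : Measure X} {f : X → F} (hf : AEStronglyMeasurable f μ) :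
    lpNorm f 2 μ = √(∫ x, ‖f x‖ ^ 2 ∂μ) := by
  simp [lpNorm_eq_integral_norm_rpow_toReal two_ne_zero ENNReal.ofNat_ne_top hf, Real.sqrt_eq_rpow]

theorem memLp_fderiv_schwartzMap {E F : Type*} [NormedAddCommGroup E] [NormedSpace ℝ E]
    [FiniteDimensional ℝ E] [MeasurableSpace E] [BorelSpace E] [NormedAddCommGroup F]
    [NormedSpace ℝ F] (v : SchwartzMap E F) (p : ℝ≥0∞) (ν : Measure E) [ν.HasTemperateGrowth] :
    MemLp (fderiv ℝ v) p ν :=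
  (SchwartzMap.fderivCLM ℝ E F v).memLp p ν

theorem H1normSq_eq_lpNorm_sq_add_lpNorm_sq {n : ℕ} {v : Rn n → ℂ} (hv : MemLp v 2 volume)
    (hDv : MemLp (fderiv ℝ v) 2 volume) :
    H1normSq v = lpNorm v 2 volume ^ 2 + lpNorm (fderiv ℝ v) 2 volume ^ 2 := by
  rw [H1normSq, integral_add ((memLp_two_iff_integrable_sq_norm hv.1).1 hv)
      ((memLp_two_iff_integrable_sq_norm hDv.1).1 hDv),
    lpNorm_two_eq_sqrt_integral hv.1, lpNorm_two_eq_sqrt_integral hDv.1,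
    Real.sq_sqrt (by positivity), Real.sq_sqrt (by positivity)]

theorem sqrt_integral_le_mul_sqrt_H1normSq {n : ℕ} {μ : Measure (Rn n)} {C : ℝ≥0}
    (v : SchwartzMap (Rn n) ℂ)
    (h : eLpNorm v 2 μ ≤ C * (eLpNorm v 2 volume + eLpNorm (fderiv ℝ v) 2 volume)) :
    √(∫ x, ‖v x‖ ^ 2 ∂μ) ≤ 2 * C * √(H1normSq v) := by
  have hv := v.memLp 2 volume
  have hDv := memLp_fderiv_schwartzMap v 2 volume
  have hfinite : C * (eLpNorm v 2 volume + eLpNorm (fderiv ℝ v) 2 volume) ≠ ∞ :=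
    ENNReal.mul_ne_top ENNReal.coe_ne_top (ENNReal.add_ne_top.2 ⟨hv.2.ne, hDv.2.ne⟩)
  have hH := H1normSq_eq_lpNorm_sq_add_lpNorm_sq hv hDv
  have hv_le : lpNorm v 2 volume ≤ √(H1normSq v) :=
    Real.le_sqrt_of_sq_le (by rw [hH]; exact le_add_of_nonneg_right (sq_nonneg _))
  have hDv_le : lpNorm (fderiv ℝ v) 2 volume ≤ √(H1normSq v) :=
    Real.le_sqrt_of_sq_le (by rw [hH]; exact le_add_of_nonneg_left (sq_nonneg _))
  calc √(∫ x, ‖v x‖ ^ 2 ∂μ)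
      = (eLpNorm v 2 μ).toReal := by
        rw [← lpNorm_two_eq_sqrt_integral v.continuous.aestronglyMeasurable,
          toReal_eLpNorm v.continuous.aestronglyMeasurable]
    _ ≤ C * (lpNorm v 2 volume + lpNorm (fderiv ℝ v) 2 volume) := by
        simpa [ENNReal.toReal_mul, ENNReal.toReal_add hv.2.ne hDv.2.ne, toReal_eLpNorm hv.1,
          toReal_eLpNorm hDv.1] using ENNReal.toReal_mono hfinite h
    _ ≤ C * (√(H1normSq v) + √(H1normSq v)) := by gcongr
    _ = 2 * C * √(H1normSq v) := by ring

theorem statement8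
    {n : ℕ} (hn : 2 ≤ n)
    -- μ is a Radon measure (regular Borel, finite on compacts)
    (μ : Measure (Rn n)) [μ.Regular] [IsFiniteMeasureOnCompacts μ]
    -- whose support is the compact set Γ
    (Γ : Set (Rn n)) (hΓcompact : IsCompact Γ)
    (hΓsupp : Γ = {x | ∀ r > 0, 0 < μ (ball x r)}) (hΓnull : μ Γᶜ = 0)
    -- μ is upper d-regular on Γ for some d ∈ (n-2, n]
    (d : ℝ) (hd₁ : (n : ℝ) - 2 < d) (hd₂ : d ≤ n)
    (c : ℝ) (hc : 0 < c)
    (hreg : ∀ x ∈ Γ, ∀ r : ℝ, 0 < r → r ≤ 1 →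
      μ (closedBall x r) ≤ ENNReal.ofReal (c * r ^ d)) :
    -- Conclusion: the trace-continuity inequality holds for all Schwartz functions.
    ∃ C : ℝ, 0 < C ∧ ∀ v : SchwartzMap (Rn n) ℂ,
      Real.sqrt (∫ x in Γ, ‖v x‖ ^ 2 ∂μ) ≤ C * Real.sqrt (H1normSq (⇑v)) := by
  obtain ⟨C, hC, htrace⟩ := statement8_general (F := ℂ) volume one_le_two ENNReal.ofNat_ne_top
    (by simpa using hd₁) (show IsUpperRegularOn μ Γ d c from hreg)
  exact ⟨2 * C, by positivity, fun v ↦ sqrt_integral_le_mul_sqrt_H1normSq v (htrace v (v.smooth 1))⟩
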